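/- arXiv:2310.08816 — 2 statements merged into one kernel-verified Lean document; each statement's English description precedes it below -/
import Mathlib

section
/- If W ∈ X satisfies B(W,W) = 0, then W = 0. (In the proof: Im B(W,W) = 0 forces Ŵ to vanish on the disk |ξ| < k; since W is a compactly supported distribution, Ŵ extends to an entire analytic function on ℂ², hence Ŵ ≡ 0 and W = 0.) -/
noncomputable section

open MeasureTheory Complex Filter Topology
open scoped Real NNReal ContDiff

/-- The plane `ℝ²`. -/
abbrev R2 : Type := EuclideanSpace ℝ (Fin 2)

/-- Euclidean dot product on `ℝ²`. -/
def rdot (x ξ : R2) : ℝ := x 0 * ξ 0 + x 1 * ξ 1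

/-- `testFT φ ξ = ∫ e^{i x·ξ} φ(x) dx`, the (inverse-type) Fourier integral of a
test function `φ`. -/
def testFT (φ : R2 → ℂ) (ξ : R2) : ℂ :=
  ∫ x : R2, Complex.exp (Complex.I * (rdot x ξ : ℂ)) * φ x

/-- The squared `H^s(ℝ²)` norm of the distribution whose Fourier transform is `F`:
`‖f‖² = (2π)⁻² ∫ (1+|ξ|²)^s |f̂(ξ)|² dξ`. -/
def wnormSq (s : ℝ) (F : R2 → ℂ) : ℝ :=
  ((2 * π) ^ 2)⁻¹ * ∫ ξ : R2, ((1 : ℝ) + ‖ξ‖ ^ 2) ^ s * ‖F ξ‖ ^ 2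

/-- The `H^s(ℝ²)` norm (Fourier-side representation). -/
def wnorm (s : ℝ) (F : R2 → ℂ) : ℝ := Real.sqrt (wnormSq s F)

/-- `F` is the Fourier transform of an element of `H^s(ℝ²)`. -/
def MemHs (s : ℝ) (F : R2 → ℂ) : Prop :=
  AEStronglyMeasurable F (volume : Measure R2) ∧
    Integrable (fun ξ : R2 => ((1 : ℝ) + ‖ξ‖ ^ 2) ^ s * ‖F ξ‖ ^ 2) volume

/-- An element `f` of `H̃^s(Γ)`: a distribution on `ℝ²` of Sobolev regularity `s`
supported in the closure of `Γ`, represented by its Fourier transform `ft`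
(a continuous function, `f` being a compactly supported distribution).
The support condition is expressed by testing against smooth compactly supported
functions `φ` whose support avoids `closure Γ`, via the Parseval pairing
`∫ f φ dx = (2π)⁻² ∫ f̂(ξ) φ̌(ξ) dξ` with `φ̌(ξ) = ∫ e^{ix·ξ} φ(x) dx`. -/
structure HTildeElt (s : ℝ) (Γ : Set R2) where
  ft : R2 → ℂ
  cont : Continuous ft
  mem : Integrable (fun ξ : R2 => ((1 : ℝ) + ‖ξ‖ ^ 2) ^ s * ‖ft ξ‖ ^ 2) volume
  supp : ∀ φ : R2 → ℂ, ContDiff ℝ ∞ φ → HasCompactSupport φ →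
    tsupport φ ∩ closure Γ = ∅ → (∫ ξ : R2, ft ξ * testFT φ ξ) = 0

/-- `Γ` is a bounded Lipschitz domain in `ℝ²`: a nonempty bounded open set whose
boundary is locally, after a rigid motion, the graph of a Lipschitz function with
the domain on one side. -/
def IsLipschitzDomain (Γ : Set R2) : Prop :=
  IsOpen Γ ∧ Bornology.IsBounded Γ ∧ Γ.Nonempty ∧
    ∀ x ∈ frontier Γ, ∃ (e : R2 ≃ₗᵢ[ℝ] R2) (L : ℝ≥0) (f : ℝ → ℝ) (U : Set R2),
      LipschitzWith L f ∧ IsOpen U ∧ x ∈ U ∧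
        ∀ y ∈ U, (y ∈ Γ ↔ f (e y 0) < e y 1)

/-- `ξ·V̂(ξ)`, i.e. `-i` times the Fourier transform of `div V`. -/
def dotFt (F1 F2 : R2 → ℂ) (ξ : R2) : ℂ := (ξ 0 : ℂ) * F1 ξ + (ξ 1 : ℂ) * F2 ξ

/-- `ξ⊥·V̂(ξ)`, i.e. `-i` times the Fourier transform of `curl V`. -/
def curlFt (F1 F2 : R2 → ℂ) (ξ : R2) : ℂ := (ξ 1 : ℂ) * F1 ξ - (ξ 0 : ℂ) * F2 ξ

/-- An element of `X = H̃^{-1/2}_div(Γ)`: a pair of elements of `H̃^{-1/2}(Γ)`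
whose distributional divergence also belongs to `H̃^{-1/2}(Γ)`. -/
structure Xelt (Γ : Set R2) where
  c1 : HTildeElt (-(1/2) : ℝ) Γ
  c2 : HTildeElt (-(1/2) : ℝ) Γ
  divMem : Integrable (fun ξ : R2 =>
    ((1 : ℝ) + ‖ξ‖ ^ 2) ^ (-(1/2) : ℝ) * ‖dotFt c1.ft c2.ft ξ‖ ^ 2) volume

/-- The Fourier transform of `div V`. -/
def divFt {Γ : Set R2} (V : Xelt Γ) (ξ : R2) : ℂ :=
  Complex.I * dotFt V.c1.ft V.c2.ft ξ

/-- The squared `H`-norm `‖V‖²_H` of a vector field. -/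
def HnormSq {Γ : Set R2} (V : Xelt Γ) : ℝ :=
  wnormSq (-(1/2)) V.c1.ft + wnormSq (-(1/2)) V.c2.ft

/-- The squared `X`-norm `‖V‖²_X = ‖V‖²_H + ‖div V‖²_{H̃^{-1/2}}`. -/
def XnormSq {Γ : Set R2} (V : Xelt Γ) : ℝ :=
  HnormSq V + wnormSq (-(1/2)) (divFt V)

/-- The `X`-norm. -/
def Xnorm {Γ : Set R2} (V : Xelt Γ) : ℝ := Real.sqrt (XnormSq V)

/-- `ĝ₀(ξ) = i/√(k²-|ξ|²)`, with the branch `√(k²-|ξ|²) = i√(|ξ|²-k²)` for `|ξ| > k`. -/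
def g0hat (k : ℝ) (ξ : R2) : ℂ :=
  if ‖ξ‖ < k then Complex.I / ((Real.sqrt (k ^ 2 - ‖ξ‖ ^ 2) : ℝ) : ℂ)
  else 1 / ((Real.sqrt (‖ξ‖ ^ 2 - k ^ 2) : ℝ) : ℂ)

/-- The integrand of the sesquilinear form `B`:
`ĝ₀(ξ) [ (|ξ|²-k²) a₁ b̄₁ - k² a₂ b̄₂ ]` with `a₁ = ξ·Ŵ/|ξ|`, `a₂ = ξ⊥·Ŵ/|ξ|`, etc. -/
def Bintegrand (k : ℝ) (F1 F2 G1 G2 : R2 → ℂ) (ξ : R2) : ℂ :=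
  g0hat k ξ *
    (((‖ξ‖ ^ 2 - k ^ 2 : ℝ) : ℂ) * (dotFt F1 F2 ξ * starRingEnd ℂ (dotFt G1 G2 ξ)) -
      ((k ^ 2 : ℝ) : ℂ) * (curlFt F1 F2 ξ * starRingEnd ℂ (curlFt G1 G2 ξ))) /
    ((‖ξ‖ ^ 2 : ℝ) : ℂ)

/-- The sesquilinear form `B(W,V)`. -/
def Bform (k : ℝ) {Γ : Set R2} (W V : Xelt Γ) : ℂ :=
  ∫ ξ : R2, Bintegrand k W.c1.ft W.c2.ft V.c1.ft V.c2.ft ξ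

/-- The sesquilinear form `E(q,V) = B(curl⃗ q, V)`, where
`curl⃗ q = (∂q/∂x₂, -∂q/∂x₁)` has Fourier transform `(iξ₂ q̂, -iξ₁ q̂)`. -/
def Eform (k : ℝ) {Γ : Set R2} (q : HTildeElt (1/2 : ℝ) Γ) (V : Xelt Γ) : ℂ :=
  ∫ ξ : R2, Bintegrand k (fun η => Complex.I * (η 1 : ℂ) * q.ft η)
      (fun η => -(Complex.I * (η 0 : ℂ) * q.ft η)) V.c1.ft V.c2.ft ξ

/-- The inner product of the Hilbert space `X`; by the Riesz representation
theorem, every bounded conjugate-linear functional on `X` is `V ↦ Xinner Y V`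
for a unique `Y ∈ X`, with functional norm `Xnorm Y`. -/
def Xinner {Γ : Set R2} (Y V : Xelt Γ) : ℂ :=
  ((((2 * π) ^ 2)⁻¹ : ℝ) : ℂ) * ∫ ξ : R2, ((((1 : ℝ) + ‖ξ‖ ^ 2) ^ (-(1/2) : ℝ) : ℝ) : ℂ) *
    (Y.c1.ft ξ * starRingEnd ℂ (V.c1.ft ξ) + Y.c2.ft ξ * starRingEnd ℂ (V.c2.ft ξ) +
      divFt Y ξ * starRingEnd ℂ (divFt V ξ))

/-- `√(k²-|ξ|²)`, with the branch `i√(|ξ|²-k²)` for `|ξ| > k`. -/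
def rootk (k : ℝ) (ξ : R2) : ℂ :=
  if ‖ξ‖ < k then ((Real.sqrt (k ^ 2 - ‖ξ‖ ^ 2) : ℝ) : ℂ)
  else Complex.I * ((Real.sqrt (‖ξ‖ ^ 2 - k ^ 2) : ℝ) : ℂ)

/-- The Fourier multiplier `i/(2√(k²-|ξ|²))` of the Helmholtz single-layer
operator `T` with kernel `e^{ik|x-y|}/(4π|x-y|)`. -/
def mT (k : ℝ) (ξ : R2) : ℂ := Complex.I / (2 * rootk k ξ)

/-- The Fourier multiplier `1/(2|ξ|)` of the Laplace single-layer operator `T₀`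
with kernel `1/(4π|x-y|)`. -/
def mT0 (ξ : R2) : ℂ := 1 / (2 * ((‖ξ‖ : ℝ) : ℂ))

/-- The Fourier multiplier of `R = T - T₀`. -/
def mR (k : ℝ) (ξ : R2) : ℂ := mT k ξ - mT0 ξ

/-- The distributions with Fourier data `G` and `E` have the same restriction to
the open set `Γ`: `⟨G - E, φ⟩ = 0` for all smooth `φ` compactly supported in `Γ`
(pairing written on the Fourier side). -/
def AgreeOn (Γ : Set R2) (G E : R2 → ℂ) : Prop :=
  ∀ φ : R2 → ℂ, ContDiff ℝ ∞ φ → HasCompactSupport φ → tsupport φ ⊆ Γ →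
    (∫ ξ : R2, (G ξ - E ξ) * testFT φ ξ) = 0

/-- The duality pairing `⟨f, ψ⟩` between `H^{1/2}(Γ)` and `H̃^{-1/2}(Γ)`, written
on the Fourier side (Plancherel): `(2π)⁻² ∫ f̂(ξ) conj(ψ̂(ξ)) dξ`, where `G = f̂`
is the Fourier data of (an extension of) `f`. -/
def dualPair (G ψ : R2 → ℂ) : ℂ :=
  ((((2 * π) ^ 2)⁻¹ : ℝ) : ℂ) * ∫ ξ : R2, G ξ * starRingEnd ℂ (ψ ξ)

/-- Holomorphy of parameter integrals, under local domination. -/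
lemma diff_param {α : Type*} [MeasurableSpace α] {μ : Measure α} (F : ℂ → α → ℂ)
    (hm : ∀ z, AEStronglyMeasurable (F z) μ)
    (hd : ∀ a, Differentiable ℂ (fun z => F z a))
    (hb : ∀ R : ℝ, ∃ bound : α → ℝ, Integrable bound μ ∧
      ∀ z : ℂ, ‖z‖ ≤ R → ∀ a, ‖F z a‖ ≤ bound a) :
    Differentiable ℂ (fun z => ∫ a, F z a ∂μ) := by
  intro z₀
  obtain ⟨bound, hbi, hbb⟩ := hb (‖z₀‖ + 2)
  have key := hasDerivAt_integral_of_dominated_loc_of_deriv_le (μ := μ) (F := F) (x₀ := z₀)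
    (s := Metric.ball z₀ 1) (bound := bound) (Metric.ball_mem_nhds _ one_pos)
    (Eventually.of_forall hm)
    (hbi.mono' (hm z₀) (Eventually.of_forall fun a => hbb z₀ (by linarith) a))
    (F' := fun z a => deriv (fun z => F z a) z) ?_ ?_ hbi ?_
  · exact key.2.differentiableAt
  · have hlim : ∀ a, Tendsto (fun n : ℕ => ((n : ℂ) + 1) * (F (z₀ + ((n : ℂ) + 1)⁻¹) a - F z₀ a)) atTop
        (𝓝 (deriv (fun z => F z a) z₀)) := by
      intro a
      have h1 := (hd a z₀).hasDerivAt.tendsto_slope_zero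
      have h2 : Tendsto (fun n : ℕ => ((n : ℂ) + 1)⁻¹) atTop (𝓝[≠] 0) := by
        apply tendsto_nhdsWithin_iff.2 ⟨?_, ?_⟩
        · have := tendsto_one_div_add_atTop_nhds_zero_nat (𝕜 := ℂ)
          simpa using this
        · filter_upwards with n
          simp only [Set.mem_compl_iff, Set.mem_singleton_iff, inv_eq_zero]
          exact Nat.cast_add_one_ne_zero n
      have h3 := h1.comp h2
      simpa [Function.comp_def] using h3
    refine aestronglyMeasurable_of_tendsto_ae atTop (fun n => ?_) (Eventually.of_forall hlim)
    exact (((hm _).sub (hm _)).const_mul _)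
  · refine Eventually.of_forall fun a z hz => ?_
    have : ‖deriv (fun z => F z a) z‖ ≤ bound a / 1 := by
      apply Complex.norm_deriv_le_of_forall_mem_sphere_norm_le one_pos (hd a).diffContOnCl
      intro w hw
      apply hbb
      have h1 : ‖w - z‖ = 1 := by simpa [dist_eq_norm] using hw
      have h2 : ‖z - z₀‖ < 1 := by simpa [dist_eq_norm] using hz
      calc ‖w‖ = ‖(w - z) + (z - z₀) + z₀‖ := by ring_nf
        _ ≤ ‖w - z‖ + ‖z - z₀‖ + ‖z₀‖ := norm_add₃_le
        _ ≤ _ := by linarith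
    simpa using this
  · exact Eventually.of_forall fun a z _ => (hd a z).hasDerivAt

/-- Fourier-Laplace integral at a complex frequency. -/
def cexpo (a b : ℂ) (x : R2) : ℂ := Complex.exp (Complex.I * ((x 0 : ℂ) * a + (x 1 : ℂ) * b))

def cft (Q : R2 → ℂ) (a b : ℂ) : ℂ := ∫ x : R2, cexpo a b x * Q x

lemma cexpo_contDiff (a b : ℂ) : ContDiff ℝ ∞ (cexpo a b) := by
  have h : ∀ i : Fin 2, ContDiff ℝ ∞ (fun x : R2 => ((x i : ℝ) : ℂ)) := fun i =>
    Complex.ofRealCLM.contDiff.comp (EuclideanSpace.proj i : R2 →L[ℝ] ℝ).contDiff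
  unfold cexpo
  exact (contDiff_const.mul (((h 0).mul contDiff_const).add ((h 1).mul contDiff_const))).cexp

lemma cexpo_integrable {Q : R2 → ℂ} (hQ : Continuous Q) (hs : HasCompactSupport Q) (a b : ℂ) :
    Integrable (fun x => cexpo a b x * Q x) :=
  ((cexpo_contDiff a b).continuous.mul hQ).integrable_of_hasCompactSupport hs.mul_left

lemma cexpo_norm_le {R : ℝ} (a b : ℂ) {x : R2} (hx : ‖x‖ ≤ R) :
    ‖cexpo a b x‖ ≤ Real.exp (R * (|a.im| + |b.im|)) := by
  unfold cexpo
  rw [Complex.norm_exp]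
  apply Real.exp_le_exp.2
  have h0 : |x 0| ≤ R := le_trans (by simpa using PiLp.norm_apply_le x 0) hx
  have h1 : |x 1| ≤ R := le_trans (by simpa using PiLp.norm_apply_le x 1) hx
  have e : (Complex.I * ((x 0 : ℂ) * a + (x 1 : ℂ) * b)).re = -(x 0 * a.im + x 1 * b.im) := by
    simp
  rw [e]
  have e0 : |x 0 * a.im| ≤ R * |a.im| := by rw [abs_mul]; gcongr
  have e1 : |x 1 * b.im| ≤ R * |b.im| := by rw [abs_mul]; gcongr
  have := neg_abs_le (x 0 * a.im)
  have := neg_abs_le (x 1 * b.im)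
  linarith

lemma cft_bound {Q : R2 → ℂ} (hQ : Continuous Q) (hs : HasCompactSupport Q) {R : ℝ}
    (hR : tsupport Q ⊆ Metric.closedBall 0 R) (a b : ℂ) :
    ‖cft Q a b‖ ≤ (∫ x, ‖Q x‖) * Real.exp (R * (|a.im| + |b.im|)) := by
  unfold cft
  rw [← integral_mul_const]
  apply norm_integral_le_of_norm_le
  · exact (hQ.integrable_of_hasCompactSupport hs).norm.mul_const _
  · filter_upwards with x
    rw [norm_mul, mul_comm]
    by_cases hx : x ∈ tsupport Q
    · have := hR hx
      gcongr
      apply cexpo_norm_le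
      simpa using this
    · simp [image_eq_zero_of_notMem_tsupport hx]

lemma cexpo_fderiv (a b : ℂ) (x v : R2) :
    fderiv ℝ (cexpo a b) x v = Complex.I * ((v 0 : ℂ) * a + (v 1 : ℂ) * b) * cexpo a b x := by
  have h : ∀ i : Fin 2, HasFDerivAt (fun x : R2 => ((x i : ℝ) : ℂ))
      (Complex.ofRealCLM.comp (EuclideanSpace.proj i : R2 →L[ℝ] ℝ)) x := fun i =>
    (Complex.ofRealCLM.comp (EuclideanSpace.proj i : R2 →L[ℝ] ℝ)).hasFDerivAt
  have h2 := ((((h 0).mul_const a).add ((h 1).mul_const b)).const_mul Complex.I).cexp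
  have h3 : HasFDerivAt (cexpo a b) _ x := h2
  rw [h3.fderiv]
  simp [cexpo]
  ring

lemma cft_ibp {Q : R2 → ℂ} (hQ : ContDiff ℝ ∞ Q) (hs : HasCompactSupport Q) (a b : ℂ) (v : R2) :
    ((v 0 : ℂ) * a + (v 1 : ℂ) * b) * cft Q a b = Complex.I * cft (fun x => fderiv ℝ Q x v) a b := by
  have hQ' : Continuous (fun x => fderiv ℝ Q x v) :=
    (hQ.continuous_fderiv (by simp)).clm_apply continuous_const
  have hs' : HasCompactSupport (fun x => fderiv ℝ Q x v) := hs.fderiv_apply (𝕜 := ℝ) v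
  have key := integral_mul_fderiv_eq_neg_fderiv_mul_of_integrable (μ := (volume : Measure R2))
    (f := cexpo a b) (g := Q) (v := v) ?_ (cexpo_integrable hQ' hs' a b)
    (cexpo_integrable hQ.continuous hs a b)
    (fun x _ => (cexpo_contDiff a b).differentiable (by simp) x)
    (fun x _ => hQ.differentiable (by simp) x)
  · unfold cft
    rw [key]
    simp only [cexpo_fderiv, mul_assoc]
    rw [integral_const_mul, integral_const_mul]
    linear_combination ((v 0 : ℂ) * a + (v 1 : ℂ) * b) * (∫ x, cexpo a b x * Q x) * Complex.I_mul_I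
  · simp only [cexpo_fderiv, mul_assoc]
    exact ((cexpo_integrable hQ.continuous hs a b).const_mul _).const_mul _

lemma cft_decay (R : ℝ) (v : R2) (n : ℕ) : ∀ {Q : R2 → ℂ}, ContDiff ℝ ∞ Q → HasCompactSupport Q →
    tsupport Q ⊆ Metric.closedBall 0 R → ∃ C : ℝ, 0 ≤ C ∧ ∀ a b : ℂ,
      ‖(v 0 : ℂ) * a + (v 1 : ℂ) * b‖ ^ n * ‖cft Q a b‖ ≤ C * Real.exp (R * (|a.im| + |b.im|)) := by
  induction n with
  | zero =>
    intro Q hQ hs hR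
    exact ⟨∫ x, ‖Q x‖, integral_nonneg fun _ => norm_nonneg _, fun a b => by
      simpa using cft_bound hQ.continuous hs hR a b⟩
  | succ n ih =>
    intro Q hQ hs hR
    have hQ' : ContDiff ℝ ∞ (fun x => fderiv ℝ Q x v) :=
      (hQ.fderiv_right (m := ∞) (by simp)).clm_apply contDiff_const
    obtain ⟨C, hC, h⟩ := ih hQ' (hs.fderiv_apply (𝕜 := ℝ) v)
      ((tsupport_fderiv_apply_subset ℝ v).trans hR)
    refine ⟨C, hC, fun a b => ?_⟩
    have e := congrArg norm (cft_ibp hQ hs a b v)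
    rw [norm_mul, norm_mul, Complex.norm_I, one_mul] at e
    rw [pow_succ, mul_assoc, e]
    exact h a b

/-- Uniform decay in `ξ` at complex shifts. -/
lemma cft_decay4 {R : ℝ} {Q : R2 → ℂ} (hQ : ContDiff ℝ ∞ Q) (hs : HasCompactSupport Q)
    (hR : tsupport Q ⊆ Metric.closedBall 0 R) : ∃ C : ℝ, 0 ≤ C ∧ ∀ a b : ℂ,
      (1 + ‖a‖ ^ 2 + ‖b‖ ^ 2) ^ 2 * ‖cft Q a b‖ ≤ C * Real.exp (R * (|a.im| + |b.im|)) := by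
  obtain ⟨C0, hC0, h0⟩ := cft_decay R !₂[1, 0] 0 hQ hs hR
  obtain ⟨C1, hC1, h1⟩ := cft_decay R !₂[1, 0] 4 hQ hs hR
  obtain ⟨C2, hC2, h2⟩ := cft_decay R !₂[0, 1] 4 hQ hs hR
  refine ⟨3 * (C0 + C1 + C2), by positivity, fun a b => ?_⟩
  have g0 := h0 a b
  have g1 := h1 a b
  have g2 := h2 a b
  simp at g0 g1 g2
  have hn := norm_nonneg (cft Q a b)
  have : (1 + ‖a‖ ^ 2 + ‖b‖ ^ 2) ^ 2 ≤ 3 * (1 + ‖a‖ ^ 4 + ‖b‖ ^ 4) := by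
    nlinarith [sq_nonneg (1 - ‖a‖ ^ 2), sq_nonneg (1 - ‖b‖ ^ 2), sq_nonneg (‖a‖ ^ 2 - ‖b‖ ^ 2)]
  calc _ ≤ 3 * (1 + ‖a‖ ^ 4 + ‖b‖ ^ 4) * ‖cft Q a b‖ := by gcongr
    _ = 3 * (‖cft Q a b‖ + ‖a‖ ^ 4 * ‖cft Q a b‖ + ‖b‖ ^ 4 * ‖cft Q a b‖) := by ring
    _ ≤ _ := by linarith

lemma R2_norm_sq (ξ : R2) : ‖ξ‖ ^ 2 = ξ 0 ^ 2 + ξ 1 ^ 2 := by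
  rw [EuclideanSpace.norm_sq_eq]; simp

lemma weight_integrable {ft : R2 → ℂ} (hc : Continuous ft)
    (hm : Integrable (fun ξ : R2 => ((1 : ℝ) + ‖ξ‖ ^ 2) ^ (-(1/2) : ℝ) * ‖ft ξ‖ ^ 2) volume) :
    Integrable (fun ξ : R2 => ‖ft ξ‖ / (1 + ‖ξ‖ ^ 2)) := by
  have h3 : Integrable (fun x : R2 => ((1 : ℝ) + ‖x‖ ^ 2) ^ (-3 / 2 : ℝ)) :=
    integrable_rpow_neg_one_add_norm_sq (by simp; norm_num)
  refine (hm.add h3).mono' ?_ ?_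
  · refine Continuous.aestronglyMeasurable ?_
    refine hc.norm.div (by fun_prop) fun x => by positivity
  · filter_upwards with ξ
    have hq : 0 < 1 + ‖ξ‖ ^ 2 := by positivity
    set p := ((1 : ℝ) + ‖ξ‖ ^ 2) ^ (-(1/2) : ℝ) with hp
    have hp0 : 0 < p := Real.rpow_pos_of_pos hq _
    have e3 : ((1 : ℝ) + ‖ξ‖ ^ 2) ^ (-3 / 2 : ℝ) = p ^ 3 := by
      rw [hp]; generalize (1 + ‖ξ‖ ^ 2 : ℝ) = q at hq
      rw [← Real.rpow_natCast, ← Real.rpow_mul hq.le]; norm_num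
    have e2 : (1 + ‖ξ‖ ^ 2)⁻¹ = p ^ 2 := by
      rw [hp]; generalize (1 + ‖ξ‖ ^ 2 : ℝ) = q at hq
      rw [← Real.rpow_natCast, ← Real.rpow_mul hq.le, ← Real.rpow_neg_one]; norm_num
    rw [Real.norm_of_nonneg (by positivity), div_eq_mul_inv, e2, Pi.add_apply, e3]
    have hx := norm_nonneg (ft ξ)
    nlinarith [mul_nonneg hp0.le (sq_nonneg (‖ft ξ‖ - p)), mul_nonneg hp0.le (sq_nonneg (‖ft ξ‖ + p)),
      mul_nonneg (mul_nonneg hp0.le hp0.le) hx]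

lemma cft_shift_bound {R : ℝ} (hR0 : 0 ≤ R) {Q : R2 → ℂ} (hQ : ContDiff ℝ ∞ Q) (hs : HasCompactSupport Q)
    (hR : tsupport Q ⊆ Metric.closedBall 0 R) (η : R2) (S : ℝ) : ∃ C : ℝ, 0 ≤ C ∧ ∀ z : ℂ, ‖z‖ ≤ S →
      ∀ ξ : R2, ‖cft Q ((ξ 0 : ℂ) - z * (η 0 : ℂ)) ((ξ 1 : ℂ) - z * (η 1 : ℂ))‖ ≤ C / (1 + ‖ξ‖ ^ 2) := by
  obtain ⟨C, hC, h⟩ := cft_decay4 hQ hs hR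
  refine ⟨(2 + 2 * S ^ 2 * ‖η‖ ^ 2) * (C * Real.exp (R * (S * |η 0| + S * |η 1|))), by positivity,
    fun z hz ξ => ?_⟩
  set a := (ξ 0 : ℂ) - z * (η 0 : ℂ) with ha
  set b := (ξ 1 : ℂ) - z * (η 1 : ℂ) with hb
  rw [le_div_iff₀ (by positivity)]
  have hS : 0 ≤ S := (norm_nonneg z).trans hz
  have im0 : |a.im| ≤ S * |η 0| := by
    have : a.im = -(z.im * η 0) := by simp [ha]
    rw [this, abs_neg, abs_mul]
    gcongr
    exact (Complex.abs_im_le_norm z).trans hz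
  have im1 : |b.im| ≤ S * |η 1| := by
    have : b.im = -(z.im * η 1) := by simp [hb]
    rw [this, abs_neg, abs_mul]
    gcongr
    exact (Complex.abs_im_le_norm z).trans hz
  have aux : ∀ (s t : ℝ), s ^ 2 ≤ 2 * ‖(s : ℂ) - z * (t : ℂ)‖ ^ 2 + 2 * S ^ 2 * t ^ 2 := by
    intro s t
    have h1 : |s| ≤ ‖(s : ℂ) - z * (t : ℂ)‖ + S * |t| := by
      calc |s| = ‖((s : ℂ) - z * (t : ℂ)) + z * (t : ℂ)‖ := by simp
        _ ≤ _ := norm_add_le _ _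
        _ ≤ _ := by
          rw [norm_mul, Complex.norm_real, Real.norm_eq_abs]; gcongr
    have h2 : |s| ^ 2 ≤ (‖(s : ℂ) - z * (t : ℂ)‖ + S * |t|) ^ 2 := by gcongr
    rw [sq_abs] at h2
    have h3 : (S * |t|) ^ 2 = S ^ 2 * t ^ 2 := by rw [mul_pow, sq_abs]
    nlinarith [sq_nonneg (‖(s : ℂ) - z * (t : ℂ)‖ - S * |t|)]
  have a0 := aux (ξ 0) (η 0)
  have a1 := aux (ξ 1) (η 1)
  rw [← ha] at a0
  rw [← hb] at a1
  have hP : 1 + ‖ξ‖ ^ 2 ≤ (2 + 2 * S ^ 2 * ‖η‖ ^ 2) * (1 + ‖a‖ ^ 2 + ‖b‖ ^ 2) ^ 2 := by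
    have hP1 : 1 ≤ 1 + ‖a‖ ^ 2 + ‖b‖ ^ 2 := by nlinarith [sq_nonneg ‖a‖, sq_nonneg ‖b‖]
    have hP2 : 1 + ‖a‖ ^ 2 + ‖b‖ ^ 2 ≤ (1 + ‖a‖ ^ 2 + ‖b‖ ^ 2) ^ 2 := by nlinarith
    have hη : 0 ≤ S ^ 2 * ‖η‖ ^ 2 := by positivity
    have : S ^ 2 * ‖η‖ ^ 2 = S ^ 2 * η 0 ^ 2 + S ^ 2 * η 1 ^ 2 := by rw [R2_norm_sq]; ring
    have h5 : S ^ 2 * ‖η‖ ^ 2 ≤ S ^ 2 * ‖η‖ ^ 2 * (1 + ‖a‖ ^ 2 + ‖b‖ ^ 2) ^ 2 :=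
      le_mul_of_one_le_right hη (hP1.trans hP2)
    rw [R2_norm_sq ξ]
    nlinarith
  calc _ ≤ ‖cft Q a b‖ * ((2 + 2 * S ^ 2 * ‖η‖ ^ 2) * (1 + ‖a‖ ^ 2 + ‖b‖ ^ 2) ^ 2) := by gcongr
    _ = (2 + 2 * S ^ 2 * ‖η‖ ^ 2) * ((1 + ‖a‖ ^ 2 + ‖b‖ ^ 2) ^ 2 * ‖cft Q a b‖) := by ring
    _ ≤ (2 + 2 * S ^ 2 * ‖η‖ ^ 2) * (C * Real.exp (R * (|a.im| + |b.im|))) :=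
      mul_le_mul_of_nonneg_left (h a b) (by positivity)
    _ ≤ _ := by gcongr

lemma cft_meas {Q : R2 → ℂ} (hQ : Continuous Q) (η : R2) (z : ℂ) :
    AEStronglyMeasurable (fun ξ : R2 => cft Q ((ξ 0 : ℂ) - z * (η 0 : ℂ)) ((ξ 1 : ℂ) - z * (η 1 : ℂ))) volume := by
  unfold cft
  have h : StronglyMeasurable (Function.uncurry fun (ξ x : R2) =>
      cexpo ((ξ 0 : ℂ) - z * (η 0 : ℂ)) ((ξ 1 : ℂ) - z * (η 1 : ℂ)) x * Q x) := by
    apply Continuous.stronglyMeasurable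
    unfold cexpo Function.uncurry
    fun_prop
  exact (h.integral_prod_right (ν := (volume : Measure R2))).aestronglyMeasurable

lemma cft_diff {Q : R2 → ℂ} (hQ : Continuous Q) (hs : HasCompactSupport Q) {R : ℝ} (hR0 : 0 ≤ R)
    (hR : tsupport Q ⊆ Metric.closedBall 0 R) (ξ η : R2) :
    Differentiable ℂ (fun z => cft Q ((ξ 0 : ℂ) - z * (η 0 : ℂ)) ((ξ 1 : ℂ) - z * (η 1 : ℂ))) := by
  unfold cft
  apply diff_param
  · intro z
    exact (cexpo_integrable hQ hs _ _).aestronglyMeasurable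
  · intro x
    unfold cexpo
    fun_prop
  · intro S
    refine ⟨fun x => ‖Q x‖ * Real.exp (R * (S * |η 0| + S * |η 1|)),
      (hQ.integrable_of_hasCompactSupport hs).norm.mul_const _, fun z hz x => ?_⟩
    rw [norm_mul, mul_comm]
    by_cases hx : x ∈ tsupport Q
    · have hxx := hR hx
      refine mul_le_mul_of_nonneg_left ?_ (norm_nonneg _)
      refine (cexpo_norm_le (R := R) _ _ (by simpa using hxx)).trans ?_
      apply Real.exp_le_exp.2
      gcongr
      · simp only [Complex.sub_im, Complex.ofReal_im, Complex.mul_im, mul_zero, Complex.ofReal_re, zero_sub, zero_add, abs_neg, abs_mul]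
        gcongr
        exact (Complex.abs_im_le_norm z).trans hz
      · simp only [Complex.sub_im, Complex.ofReal_im, Complex.mul_im, mul_zero, Complex.ofReal_re, zero_sub, zero_add, abs_neg, abs_mul]
        gcongr
        exact (Complex.abs_im_le_norm z).trans hz
    · simp [image_eq_zero_of_notMem_tsupport hx]

/-- the pairing with the analytic family of test functions -/
def pairing (ft : R2 → ℂ) (Q : R2 → ℂ) (η : R2) (z : ℂ) : ℂ :=
  ∫ ξ : R2, ft ξ * cft Q ((ξ 0 : ℂ) - z * (η 0 : ℂ)) ((ξ 1 : ℂ) - z * (η 1 : ℂ))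

lemma pairing_dom {R : ℝ} (hR0 : 0 ≤ R) {Q : R2 → ℂ} (hQ : ContDiff ℝ ∞ Q) (hs : HasCompactSupport Q)
    (hR : tsupport Q ⊆ Metric.closedBall 0 R) (η : R2) {ft : R2 → ℂ}
    (hw : Integrable (fun ξ : R2 => ‖ft ξ‖ / (1 + ‖ξ‖ ^ 2))) (S : ℝ) :
    ∃ bound : R2 → ℝ, Integrable bound volume ∧ ∀ z : ℂ, ‖z‖ ≤ S → ∀ ξ : R2,
      ‖ft ξ * cft Q ((ξ 0 : ℂ) - z * (η 0 : ℂ)) ((ξ 1 : ℂ) - z * (η 1 : ℂ))‖ ≤ bound ξ := by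
  obtain ⟨C, hC, h⟩ := cft_shift_bound hR0 hQ hs hR η S
  refine ⟨_, hw.const_mul C, fun z hz ξ => ?_⟩
  rw [norm_mul]
  calc _ ≤ ‖ft ξ‖ * (C / (1 + ‖ξ‖ ^ 2)) := by gcongr; exact h z hz ξ
    _ = _ := by ring

lemma pairing_integrable {R : ℝ} (hR0 : 0 ≤ R) {Q : R2 → ℂ} (hQ : ContDiff ℝ ∞ Q) (hs : HasCompactSupport Q)
    (hR : tsupport Q ⊆ Metric.closedBall 0 R) (η : R2) {ft : R2 → ℂ} (hc : Continuous ft)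
    (hw : Integrable (fun ξ : R2 => ‖ft ξ‖ / (1 + ‖ξ‖ ^ 2))) (z : ℂ) :
    Integrable (fun ξ : R2 => ft ξ * cft Q ((ξ 0 : ℂ) - z * (η 0 : ℂ)) ((ξ 1 : ℂ) - z * (η 1 : ℂ))) := by
  obtain ⟨bd, hbi, hb⟩ := pairing_dom hR0 hQ hs hR η hw ‖z‖
  exact hbi.mono' (hc.aestronglyMeasurable.mul (cft_meas hQ.continuous η z))
    (Eventually.of_forall (hb z le_rfl))

lemma pairing_diff {R : ℝ} (hR0 : 0 ≤ R) {Q : R2 → ℂ} (hQ : ContDiff ℝ ∞ Q) (hs : HasCompactSupport Q)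
    (hR : tsupport Q ⊆ Metric.closedBall 0 R) (η : R2) {ft : R2 → ℂ} (hc : Continuous ft)
    (hw : Integrable (fun ξ : R2 => ‖ft ξ‖ / (1 + ‖ξ‖ ^ 2))) :
    Differentiable ℂ (pairing ft Q η) := by
  unfold pairing
  apply diff_param
  · intro z
    exact hc.aestronglyMeasurable.mul (cft_meas hQ.continuous η z)
  · intro ξ
    exact (cft_diff hQ.continuous hs hR0 hR ξ η).const_mul _
  · exact pairing_dom hR0 hQ hs hR η hw

/-- a fixed bump function -/
def bump0 : ContDiffBump (0 : R2) := ⟨1, 2, one_pos, one_lt_two⟩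

/-- dilated cutoff functions -/
def cutoff (n : ℝ) (x : R2) : ℂ := ((bump0 (n⁻¹ • x) : ℝ) : ℂ)

lemma cutoff_contDiff (n : ℝ) : ContDiff ℝ ∞ (cutoff n) := by
  unfold cutoff
  exact Complex.ofRealCLM.contDiff.comp (bump0.contDiff.comp (contDiff_const_smul _))

lemma cutoff_tsupport {n : ℝ} (hn : 0 < n) : tsupport (cutoff n) ⊆ Metric.closedBall 0 (2 * n) := by
  apply closure_minimal _ Metric.isClosed_closedBall
  intro x hx
  by_contra hc
  apply hx
  simp only [Metric.mem_closedBall, dist_zero_right, not_le] at hc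
  unfold cutoff
  rw [bump0.zero_of_le_dist]
  · simp
  · change 2 ≤ _
    rw [dist_zero_right, norm_smul, norm_inv, Real.norm_of_nonneg hn.le, inv_mul_eq_div, le_div_iff₀ hn]
    exact hc.le

lemma cutoff_compact {n : ℝ} (hn : 0 < n) : HasCompactSupport (cutoff n) :=
  (isCompact_closedBall (0 : R2) (2 * n)).of_isClosed_subset (isClosed_tsupport _) (cutoff_tsupport hn)

lemma cutoff_one {n : ℝ} (hn : 0 < n) {x : R2} (hx : ‖x‖ ≤ n) : cutoff n x = 1 := by
  unfold cutoff
  rw [bump0.one_of_mem_closedBall]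
  · simp
  · rw [mem_closedBall_zero_iff, norm_smul, norm_inv, Real.norm_of_nonneg hn.le, inv_mul_eq_div, div_le_iff₀ hn]
    change _ ≤ 1 * n
    linarith

lemma cutoff_scale {n : ℝ} (hn : 0 < n) (a b : ℂ) :
    cft (cutoff n) a b = (n : ℂ) ^ 2 * cft (cutoff 1) (n * a) (n * b) := by
  unfold cft
  have h := Measure.integral_comp_inv_smul (volume : Measure R2)
    (fun x => cexpo (n * a) (n * b) x * cutoff 1 x) n
  simp only [finrank_euclideanSpace, Fintype.card_fin] at h
  rw [abs_of_nonneg (by positivity), Complex.real_smul, Complex.ofReal_pow] at h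
  rw [← h]
  congr 1
  ext x
  have hn' : (n : ℂ) ≠ 0 := by exact_mod_cast hn.ne'
  unfold cexpo cutoff
  simp only [inv_one, one_smul, PiLp.smul_apply, smul_eq_mul, Complex.ofReal_mul, Complex.ofReal_inv]
  congr 2
  field_simp

lemma cutoff_support {Γ : Set R2} {M n m : ℝ} (hM : Γ ⊆ Metric.closedBall 0 M) (hn0 : 0 < n) (hm0 : 0 < m)
    (hn : M < n) (hm : M < m) (e : R2 → ℂ) :
    tsupport (fun x => e x * (cutoff n x - cutoff m x)) ∩ closure Γ = ∅ := by
  apply Set.eq_empty_of_forall_notMem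
  rintro x ⟨hx, hxΓ⟩
  have hxM : ‖x‖ ≤ M := by
    have := closure_minimal hM Metric.isClosed_closedBall hxΓ
    simpa using this
  revert hx
  apply notMem_tsupport_iff_eventuallyEq.2
  have : ∀ᶠ y in 𝓝 x, ‖y‖ < min n m :=
    (continuous_norm.tendsto x).eventually_lt_const (lt_min (by linarith) (by linarith))
  filter_upwards [this] with y hy
  rw [cutoff_one hn0 (hy.le.trans (min_le_left _ _)), cutoff_one hm0 (hy.le.trans (min_le_right _ _))]
  simp

lemma testFT_shift (Q : R2 → ℂ) (η ξ : R2) (t : ℝ) :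
    testFT (fun x => cexpo (-(t * (η 0 : ℂ))) (-(t * (η 1 : ℂ))) x * Q x) ξ =
      cft Q ((ξ 0 : ℂ) - t * (η 0 : ℂ)) ((ξ 1 : ℂ) - t * (η 1 : ℂ)) := by
  unfold testFT cft
  congr 1
  ext x
  rw [← mul_assoc]
  congr 1
  unfold cexpo rdot
  rw [← Complex.exp_add]
  congr 1
  push_cast
  ring

lemma pairing_indep {Γ : Set R2} {M n m : ℝ} (hM : Γ ⊆ Metric.closedBall 0 M) (hn0 : 0 < n) (hm0 : 0 < m)
    (hn : M < n) (hm : M < m) (f : HTildeElt (-(1/2) : ℝ) Γ) (η : R2) (t : ℝ) :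
    pairing f.ft (cutoff n) η t = pairing f.ft (cutoff m) η t := by
  have hw := weight_integrable f.cont f.mem
  have i1 := pairing_integrable (by positivity) (cutoff_contDiff n) (cutoff_compact hn0)
    (cutoff_tsupport hn0) η f.cont hw t
  have i2 := pairing_integrable (by positivity) (cutoff_contDiff m) (cutoff_compact hm0)
    (cutoff_tsupport hm0) η f.cont hw t
  rw [← sub_eq_zero]
  unfold pairing
  rw [← integral_sub i1 i2]
  have h := f.supp (fun x => cexpo (-(t * (η 0 : ℂ))) (-(t * (η 1 : ℂ))) x * (cutoff n x - cutoff m x))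
    ((cexpo_contDiff _ _).mul ((cutoff_contDiff n).sub (cutoff_contDiff m)))
    (((cutoff_compact hn0).sub (cutoff_compact hm0)).mul_left)
    (cutoff_support hM hn0 hm0 hn hm _)
  rw [← h]
  congr 1
  ext ξ
  rw [testFT_shift (fun x => cutoff n x - cutoff m x), ← mul_sub]
  congr 1
  unfold cft
  rw [← integral_sub (cexpo_integrable (cutoff_contDiff n).continuous (cutoff_compact hn0) _ _)
    (cexpo_integrable (cutoff_contDiff m).continuous (cutoff_compact hm0) _ _)]
  simp only [mul_sub]

/-- the Fourier integral of the fixed bump -/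
def Th (ζ : R2) : ℂ := cft (cutoff 1) (ζ 0 : ℂ) (ζ 1 : ℂ)

lemma Th_bound : ∃ C : ℝ, 0 ≤ C ∧ ∀ ζ : R2, ‖Th ζ‖ ≤ C / (1 + ‖ζ‖ ^ 2) ^ 2 := by
  obtain ⟨C, hC, h⟩ := cft_decay4 (cutoff_contDiff 1) (cutoff_compact one_pos) (cutoff_tsupport one_pos)
  refine ⟨C, hC, fun ζ => ?_⟩
  have := h (ζ 0) (ζ 1)
  rw [le_div_iff₀ (by positivity), mul_comm, R2_norm_sq, ← add_assoc]
  simpa [Th] using this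

lemma Th_meas : AEStronglyMeasurable Th volume := by
  have := cft_meas (cutoff_contDiff 1).continuous 0 0
  simp only [zero_mul, sub_zero] at this
  exact this

lemma Th_integrable : Integrable Th := by
  obtain ⟨C, hC, h⟩ := Th_bound
  have h3 : Integrable (fun x : R2 => ((1 : ℝ) + ‖x‖ ^ 2) ^ (-4 / 2 : ℝ)) :=
    integrable_rpow_neg_one_add_norm_sq (by simp; norm_num)
  refine (h3.const_mul C).mono' Th_meas ?_
  filter_upwards with ζ
  refine (h ζ).trans (le_of_eq ?_)
  have hq : 0 < 1 + ‖ζ‖ ^ 2 := by positivity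
  generalize (1 + ‖ζ‖ ^ 2 : ℝ) = q at hq
  rw [show (-4 / 2 : ℝ) = -((2 : ℕ) : ℝ) by norm_num, Real.rpow_neg hq.le, Real.rpow_natCast, div_eq_mul_inv]

lemma Th_integral_ne : (∫ ζ, Th ζ) ≠ 0 := by
  intro h0
  have e : FourierTransformInv.fourierInv (cutoff 1) = fun w => Th ((2 * π) • w) := by
    ext w
    rw [Real.fourierInv_eq']
    unfold Th cft
    congr 1
    ext x
    rw [smul_eq_mul]
    congr 1
    unfold cexpo
    congr 1
    simp [PiLp.inner_apply]
    ring
  have hi : Integrable (FourierTransformInv.fourierInv (cutoff 1)) := by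
    rw [e]
    exact Th_integrable.comp_smul (by positivity)
  have hi' : Integrable (FourierTransform.fourier (cutoff 1)) := by
    have h2 := hi.comp_neg
    simpa only [Real.fourierInv_eq_fourier_neg, neg_neg] using h2
  have hc := (cutoff_contDiff 1).continuous
  have inv := hc.fourier_fourierInv_eq (hc.integrable_of_hasCompactSupport (cutoff_compact one_pos)) hi'
  have inv0 := congrFun inv 0
  rw [cutoff_one one_pos (by simp), Real.fourier_eq', e] at inv0
  simp only [inner_zero_right, mul_zero, Complex.ofReal_zero, zero_mul, Complex.exp_zero, one_smul] at inv0
  rw [Measure.integral_comp_smul, h0, smul_zero] at inv0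
  exact zero_ne_one inv0

lemma approx_far {p ξ : R2} {N C : ℝ} (hN : 0 < N) (hC : 0 ≤ C)
    (h : ∀ ζ : R2, ‖Th ζ‖ ≤ C / (1 + ‖ζ‖ ^ 2) ^ 2) (hu : 1 ≤ ‖ξ - p‖) :
    ‖(N : ℂ) ^ 2 * Th (N • (ξ - p))‖ ≤ C * (3 + 2 * ‖p‖ ^ 2) * (1 / N ^ 2) * (1 / (1 + ‖ξ‖ ^ 2)) := by
  set u := ‖ξ - p‖ with hud
  have h1 : ‖(N : ℂ) ^ 2 * Th (N • (ξ - p))‖ ≤ N ^ 2 * (C / (N ^ 2 * u ^ 2) ^ 2) := by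
    rw [norm_mul, norm_pow, Complex.norm_real, Real.norm_of_nonneg hN.le]
    gcongr
    refine (h _).trans ?_
    rw [norm_smul, Real.norm_of_nonneg hN.le, mul_pow]
    gcongr
    linarith
  have h2 : 1 + ‖ξ‖ ^ 2 ≤ (3 + 2 * ‖p‖ ^ 2) * u ^ 4 := by
    have h3 : ‖ξ‖ ≤ u + ‖p‖ := by
      calc ‖ξ‖ = ‖(ξ - p) + p‖ := by simp
        _ ≤ _ := norm_add_le _ _
    have h4 : ‖ξ‖ ^ 2 ≤ (u + ‖p‖) ^ 2 := by gcongr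
    have h5 : 1 ≤ u ^ 2 := by nlinarith
    have h6 : u ^ 2 ≤ u ^ 4 := by nlinarith
    nlinarith [sq_nonneg (u - ‖p‖), mul_le_mul_of_nonneg_left (h5.trans h6) (sq_nonneg ‖p‖)]
  refine h1.trans ?_
  have hu0 : 0 < u := by linarith
  have e1 : N ^ 2 * (C / (N ^ 2 * u ^ 2) ^ 2) = C * (1 / N ^ 2) * (1 / u ^ 4) := by
    field_simp
  have e2 : 1 / u ^ 4 ≤ (3 + 2 * ‖p‖ ^ 2) * (1 / (1 + ‖ξ‖ ^ 2)) := by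
    rw [mul_one_div, div_le_div_iff₀ (by positivity) (by positivity)]
    linarith
  rw [e1]
  calc _ ≤ C * (1 / N ^ 2) * ((3 + 2 * ‖p‖ ^ 2) * (1 / (1 + ‖ξ‖ ^ 2))) := by gcongr
    _ = _ := by ring

lemma approx {ft : R2 → ℂ} (hc : Continuous ft)
    (hw : Integrable (fun ξ : R2 => ‖ft ξ‖ / (1 + ‖ξ‖ ^ 2))) (p : R2)
    (hint : ∀ n : ℕ, Integrable (fun ξ : R2 =>
      ft ξ * ((((n : ℝ) + 1 : ℝ) : ℂ) ^ 2 * Th (((n : ℝ) + 1) • (ξ - p))))) :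
    Tendsto (fun n : ℕ => ∫ ξ : R2, ft ξ * ((((n : ℝ) + 1 : ℝ) : ℂ) ^ 2 * Th (((n : ℝ) + 1) • (ξ - p))))
      atTop (𝓝 (∫ ζ, ft p * Th ζ)) := by
  obtain ⟨C, hC, h⟩ := Th_bound
  have hms : MeasurableSet (Metric.ball p 1) := Metric.isOpen_ball.measurableSet
  have hsplit : ∀ n : ℕ, ∫ ξ : R2, ft ξ * ((((n : ℝ) + 1 : ℝ) : ℂ) ^ 2 * Th (((n : ℝ) + 1) • (ξ - p))) =
      (∫ ζ, (Metric.ball p 1).indicator ft (p + ((n : ℝ) + 1)⁻¹ • ζ) * Th ζ) +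
      ∫ ξ in (Metric.ball p 1)ᶜ, ft ξ * ((((n : ℝ) + 1 : ℝ) : ℂ) ^ 2 * Th (((n : ℝ) + 1) • (ξ - p))) := by
    intro n
    rw [← integral_add_compl hms (hint n)]
    congr 1
    have hN : (0 : ℝ) < (n : ℝ) + 1 := by positivity
    set N : ℝ := (n : ℝ) + 1
    rw [← integral_indicator hms]
    set G : R2 → ℂ := fun ζ => (Metric.ball p 1).indicator ft (p + N⁻¹ • ζ) * Th ζ with hG
    have e1 := integral_sub_right_eq_self (μ := (volume : Measure R2)) (fun x => G (N • x)) p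
    rw [Measure.integral_comp_smul] at e1
    simp only [finrank_euclideanSpace, Fintype.card_fin] at e1
    rw [abs_of_nonneg (by positivity), Complex.real_smul] at e1
    have e2 : ∫ ζ, G ζ = (N : ℂ) ^ 2 * ∫ x, G (N • (x - p)) := by
      rw [e1]
      have hN' : (N : ℂ) ≠ 0 := by exact_mod_cast hN.ne'
      push_cast
      field_simp
    rw [e2, ← integral_const_mul]
    congr 1
    ext ξ
    have e3 : p + N⁻¹ • N • (ξ - p) = ξ := by
      rw [smul_smul, inv_mul_cancel₀ hN.ne', one_smul]; abel
    simp only [hG, e3]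
    by_cases hx : ξ ∈ Metric.ball p 1
    · simp only [Set.indicator_of_mem hx]; ring
    · simp only [Set.indicator_of_notMem hx]; ring
  simp_rw [hsplit]
  rw [← add_zero (∫ ζ, ft p * Th ζ)]
  have hcast : Tendsto (fun n : ℕ => ((n : ℝ) + 1)⁻¹) atTop (𝓝 0) := by
    simpa using tendsto_one_div_add_atTop_nhds_zero_nat (𝕜 := ℝ)
  apply Tendsto.add
  · obtain ⟨M, hM⟩ := (isCompact_closedBall p 1).exists_bound_of_continuousOn hc.continuousOn
    apply tendsto_integral_of_dominated_convergence (fun ζ => M * ‖Th ζ‖)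
    · intro n
      refine AEStronglyMeasurable.mul ?_ Th_meas
      have : StronglyMeasurable ((Metric.ball p 1).indicator ft) := hc.stronglyMeasurable.indicator hms
      exact (this.comp_measurable (by fun_prop)).aestronglyMeasurable
    · exact Th_integrable.norm.const_mul M
    · intro n
      filter_upwards with ζ
      rw [norm_mul]
      gcongr
      by_cases hx : p + ((n : ℝ) + 1)⁻¹ • ζ ∈ Metric.ball p 1
      · rw [Set.indicator_of_mem hx]
        exact hM _ (Metric.ball_subset_closedBall hx)
      · rw [Set.indicator_of_notMem hx, norm_zero]
        exact (norm_nonneg _).trans (hM p (by simp))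
    · filter_upwards with ζ
      apply Tendsto.mul_const
      have l1 : Tendsto (fun n : ℕ => p + ((n : ℝ) + 1)⁻¹ • ζ) atTop (𝓝 p) := by
        simpa using (hcast.smul_const ζ).const_add p
      have l2 : Tendsto ((Metric.ball p 1).indicator ft) (𝓝 p) (𝓝 (ft p)) := by
        refine (hc.tendsto p).congr' ?_
        filter_upwards [Metric.ball_mem_nhds p one_pos] with x hx
        rw [Set.indicator_of_mem hx]
      exact l2.comp l1
  · set K := C * (3 + 2 * ‖p‖ ^ 2)
    have l : Tendsto (fun n : ℕ => K * (1 / ((n : ℝ) + 1) ^ 2) *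
        ∫ ξ in (Metric.ball p 1)ᶜ, ‖ft ξ‖ / (1 + ‖ξ‖ ^ 2)) atTop (𝓝 0) := by
      have := ((hcast.pow 2).const_mul K).mul_const (∫ ξ in (Metric.ball p 1)ᶜ, ‖ft ξ‖ / (1 + ‖ξ‖ ^ 2))
      simpa using this
    apply squeeze_zero_norm _ l
    intro n
    rw [← integral_const_mul]
    apply norm_integral_le_of_norm_le (hw.integrableOn.const_mul _)
    refine ae_restrict_of_forall_mem hms.compl fun ξ hξ => ?_
    have hu : 1 ≤ ‖ξ - p‖ := by simpa [dist_eq_norm] using hξ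
    rw [norm_mul]
    have := approx_far (N := (n : ℝ) + 1) (by positivity) hC h hu
    calc _ ≤ ‖ft ξ‖ * _ := mul_le_mul_of_nonneg_left this (norm_nonneg _)
      _ = _ := by ring

/-- The Paley-Wiener representation along real lines. -/
lemma pairing_eq {Γ : Set R2} {M m : ℝ} (hM : Γ ⊆ Metric.closedBall 0 M) (hm0 : 0 < m)
    (hm : M < m) (f : HTildeElt (-(1/2) : ℝ) Γ) (η : R2) (t : ℝ) :
    pairing f.ft (cutoff m) η t = f.ft (t • η) * ∫ ζ, Th ζ := by
  have hw := weight_integrable f.cont f.mem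
  have e : ∀ n : ℕ, (fun ξ : R2 => f.ft ξ *
      cft (cutoff ((n : ℝ) + 1)) ((ξ 0 : ℂ) - t * (η 0 : ℂ)) ((ξ 1 : ℂ) - t * (η 1 : ℂ))) =
      fun ξ : R2 => f.ft ξ * ((((n : ℝ) + 1 : ℝ) : ℂ) ^ 2 * Th (((n : ℝ) + 1) • (ξ - t • η))) := by
    intro n
    ext ξ
    rw [cutoff_scale (by positivity)]
    simp [Th]
  have lim := approx f.cont hw (t • η) (fun n => by
    rw [← e n]
    exact pairing_integrable (R := 2 * ((n : ℝ) + 1)) (by positivity) (cutoff_contDiff _) (cutoff_compact (by positivity))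
      (cutoff_tsupport (by positivity)) η f.cont hw t)
  rw [← integral_const_mul]
  refine tendsto_nhds_unique ?_ lim
  apply tendsto_const_nhds.congr'
  filter_upwards [eventually_gt_atTop (Nat.ceil M)] with n hn
  have hn' : M < (n : ℝ) + 1 := by
    have := Nat.lt_of_ceil_lt hn
    linarith
  rw [← e n, pairing_indep hM hm0 (by positivity) hm hn' f η t]
  rfl

lemma ft_zero {Γ : Set R2} (hb : Bornology.IsBounded Γ) (f : HTildeElt (-(1/2) : ℝ) Γ) {k : ℝ} (hk : 0 < k)
    (h : ∀ ξ : R2, ‖ξ‖ < k → f.ft ξ = 0) (η : R2) : f.ft η = 0 := by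
  obtain ⟨M, hM⟩ := hb.subset_closedBall (0 : R2)
  set m := max M 0 + 1
  have hm0 : 0 < m := by positivity
  have hm : M < m := by have := le_max_left M 0; linarith
  have hw := weight_integrable f.cont f.mem
  have hd := pairing_diff (R := 2 * m) (by positivity) (cutoff_contDiff m) (cutoff_compact hm0)
    (cutoff_tsupport hm0) η f.cont hw
  have han : AnalyticOnNhd ℂ (pairing f.ft (cutoff m) η) Set.univ := fun z _ => hd.analyticAt z
  have hz := han.eqOn_zero_of_preconnected_of_frequently_eq_zero isPreconnected_univ (Set.mem_univ (0 : ℂ)) ?_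
  · have h1 := hz (Set.mem_univ (((1 : ℝ) : ℂ)))
    rw [pairing_eq hM hm0 hm f η 1, one_smul] at h1
    exact (mul_eq_zero.1 h1).resolve_right Th_integral_ne
  · have h2 : Tendsto (fun n : ℕ => ((((n : ℝ) + 1)⁻¹ : ℝ) : ℂ)) atTop (𝓝[≠] 0) := by
      apply tendsto_nhdsWithin_iff.2 ⟨?_, ?_⟩
      · have := tendsto_one_div_add_atTop_nhds_zero_nat (𝕜 := ℂ)
        simpa using this
      · filter_upwards with n
        simp only [Set.mem_compl_iff, Set.mem_singleton_iff, Complex.ofReal_eq_zero, inv_eq_zero]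
        positivity
    refine h2.frequently (Eventually.frequently ?_)
    have h3 : Tendsto (fun n : ℕ => ‖((n : ℝ) + 1)⁻¹ • η‖) atTop (𝓝 0) := by
      have hcast : Tendsto (fun n : ℕ => ((n : ℝ) + 1)⁻¹) atTop (𝓝 0) := by
        simpa using tendsto_one_div_add_atTop_nhds_zero_nat (𝕜 := ℝ)
      simpa using (hcast.smul_const η).norm
    filter_upwards [h3.eventually_lt_const hk] with n hn
    rw [pairing_eq hM hm0 hm f η _, h _ hn, zero_mul]

/-- Integrability of the singular weight on balls. -/
lemma sing_integrable {k R : ℝ} (hk : 0 < k) (hR : 0 < R) :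
    Integrable (fun ξ : R2 => (Set.Iic R).indicator (fun y : ℝ => (Real.sqrt |y ^ 2 - k ^ 2|)⁻¹) ‖ξ‖) := by
  rw [integrable_fun_norm_addHaar (volume : Measure R2)]
  simp only [finrank_euclideanSpace, Fintype.card_fin, Nat.add_one_sub_one, pow_one, smul_eq_mul]
  have e : (fun y : ℝ => y * (Set.Iic R).indicator (fun y : ℝ => (Real.sqrt |y ^ 2 - k ^ 2|)⁻¹) y) =
      (Set.Iic R).indicator (fun y : ℝ => y * (Real.sqrt |y ^ 2 - k ^ 2|)⁻¹) := by
    ext y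
    by_cases hy : y ∈ Set.Iic R
    · simp [Set.indicator_of_mem hy]
    · simp [Set.indicator_of_notMem hy]
  rw [e, IntegrableOn, integrable_indicator_iff measurableSet_Iic, IntegrableOn,
    Measure.restrict_restrict measurableSet_Iic, Set.inter_comm, Set.Ioi_inter_Iic]
  have h1 : IntegrableOn (fun y : ℝ => (y - k) ^ (-(1/2) : ℝ)) (Set.Ioc 0 R) := by
    have := (intervalIntegral.intervalIntegrable_rpow' (a := 0 - k) (b := R - k)
      (r := (-(1/2) : ℝ)) (by norm_num)).comp_sub_right k
    simp only [sub_add_cancel] at this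
    exact (intervalIntegrable_iff_integrableOn_Ioc_of_le hR.le).1 this
  have h2 : IntegrableOn (fun y : ℝ => (k - y) ^ (-(1/2) : ℝ)) (Set.Ioc 0 R) := by
    have := (intervalIntegral.intervalIntegrable_rpow' (a := k - 0) (b := k - R)
      (r := (-(1/2) : ℝ)) (by norm_num)).comp_sub_left k
    simp only [sub_sub_cancel] at this
    exact (intervalIntegrable_iff_integrableOn_Ioc_of_le hR.le).1 this
  have h3 := (h1.norm.add h2.norm).const_mul (R * (Real.sqrt k)⁻¹)
  refine h3.mono' ?_ ?_
  · exact (by fun_prop : Measurable (fun y : ℝ => y * (Real.sqrt |y ^ 2 - k ^ 2|)⁻¹)).aestronglyMeasurable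
  · refine ae_restrict_of_forall_mem measurableSet_Ioc fun y hy => ?_
    obtain ⟨hy0, hyR⟩ := hy
    rw [Real.norm_of_nonneg (by positivity)]
    have f1 : (Real.sqrt |y ^ 2 - k ^ 2|)⁻¹ ≤ (Real.sqrt k)⁻¹ * (Real.sqrt |y - k|)⁻¹ := by
      rw [show y ^ 2 - k ^ 2 = (y + k) * (y - k) by ring, abs_mul, Real.sqrt_mul (abs_nonneg _), mul_inv]
      gcongr
      rw [abs_of_pos (by positivity)]
      linarith
    have f2 : (Real.sqrt |y - k|)⁻¹ ≤ ‖(y - k) ^ (-(1/2) : ℝ)‖ + ‖(k - y) ^ (-(1/2) : ℝ)‖ := by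
      have hs : ∀ u : ℝ, 0 ≤ u → (Real.sqrt |u|)⁻¹ = ‖u ^ (-(1/2) : ℝ)‖ := by
        intro u hu
        rw [abs_of_nonneg hu, Real.rpow_neg hu, ← Real.sqrt_eq_rpow, Real.norm_of_nonneg (by positivity)]
      rcases le_total 0 (y - k) with hu | hu
      · rw [hs _ hu]
        linarith [norm_nonneg ((k - y) ^ (-(1/2) : ℝ))]
      · rw [abs_sub_comm, hs (k - y) (by linarith)]
        linarith [norm_nonneg ((y - k) ^ (-(1/2) : ℝ))]
    calc y * (Real.sqrt |y ^ 2 - k ^ 2|)⁻¹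
        ≤ R * ((Real.sqrt k)⁻¹ * (‖(y - k) ^ (-(1/2) : ℝ)‖ + ‖(k - y) ^ (-(1/2) : ℝ)‖)) := by
          gcongr
          exact f1.trans (by gcongr)
      _ = _ := by simp only [Pi.add_apply]; ring

lemma g0hat_norm {k : ℝ} (hk : 0 < k) (ξ : R2) : ‖g0hat k ξ‖ = (Real.sqrt |‖ξ‖ ^ 2 - k ^ 2|)⁻¹ := by
  unfold g0hat
  have h0 := norm_nonneg ξ
  split_ifs with h
  · rw [norm_div, Complex.norm_I, Complex.norm_real, Real.norm_of_nonneg (Real.sqrt_nonneg _), one_div,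
      abs_sub_comm, abs_of_nonneg (by nlinarith)]
  · rw [norm_div, norm_one, Complex.norm_real, Real.norm_of_nonneg (Real.sqrt_nonneg _), one_div,
      abs_of_nonneg (by nlinarith)]

lemma g0hat_meas (k : ℝ) : Measurable (g0hat k) := by
  unfold g0hat
  refine Measurable.ite (measurableSet_lt (by fun_prop) (by fun_prop)) ?_ ?_ <;> fun_prop

lemma dot_curl (F1 F2 : R2 → ℂ) (ξ : R2) :
    ‖dotFt F1 F2 ξ‖ ^ 2 + ‖curlFt F1 F2 ξ‖ ^ 2 = ‖ξ‖ ^ 2 * (‖F1 ξ‖ ^ 2 + ‖F2 ξ‖ ^ 2) := by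
  rw [R2_norm_sq]
  simp only [← Complex.normSq_eq_norm_sq, Complex.normSq_apply, dotFt, curlFt]
  simp
  ring

lemma Bint_eq (k : ℝ) (F1 F2 : R2 → ℂ) (ξ : R2) :
    Bintegrand k F1 F2 F1 F2 ξ = g0hat k ξ *
      ((((‖ξ‖ ^ 2 - k ^ 2) * ‖dotFt F1 F2 ξ‖ ^ 2 - k ^ 2 * ‖curlFt F1 F2 ξ‖ ^ 2) / ‖ξ‖ ^ 2 : ℝ) : ℂ) := by
  unfold Bintegrand
  rw [Complex.mul_conj, Complex.mul_conj, Complex.normSq_eq_norm_sq, Complex.normSq_eq_norm_sq]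
  push_cast
  ring

lemma Bint_integrable {Γ : Set R2} {k : ℝ} (hk : 0 < k) (W : Xelt Γ) :
    Integrable (fun ξ => Bintegrand k W.c1.ft W.c2.ft W.c1.ft W.c2.ft ξ) := by
  set R := 2 * k + 1
  have hR : 0 < R := by positivity
  have c1 := W.c1.cont
  have c2 := W.c2.cont
  have hcF : Continuous (fun ξ => ‖W.c1.ft ξ‖ ^ 2 + ‖W.c2.ft ξ‖ ^ 2) := by fun_prop
  obtain ⟨M, hM⟩ := (isCompact_closedBall (0 : R2) R).exists_bound_of_continuousOn hcF.continuousOn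
  have hI := ((sing_integrable hk hR).const_mul ((R ^ 2 + k ^ 2) * M)).add
    ((W.divMem.const_mul 2).add ((W.c1.mem.add W.c2.mem).const_mul (4 * k ^ 2)))
  refine hI.mono' ?_ ?_
  · have hm : Measurable (fun ξ => Bintegrand k W.c1.ft W.c2.ft W.c1.ft W.c2.ft ξ) := by
      have := g0hat_meas k
      have := c1.measurable
      have := c2.measurable
      simp only [Bint_eq, dotFt, curlFt]
      fun_prop
    exact hm.aestronglyMeasurable
  · filter_upwards with ξ
    rw [Bint_eq, norm_mul, g0hat_norm hk, Complex.norm_real, Real.norm_eq_abs]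
    have hdc := dot_curl W.c1.ft W.c2.ft ξ
    have hMξ := hM ξ
    simp only [Pi.add_apply]
    set D := ‖dotFt W.c1.ft W.c2.ft ξ‖ ^ 2
    set E := ‖curlFt W.c1.ft W.c2.ft ξ‖ ^ 2
    set A := ‖W.c1.ft ξ‖ ^ 2
    set B := ‖W.c2.ft ξ‖ ^ 2
    have hD : 0 ≤ D := by positivity
    have hE : 0 ≤ E := by positivity
    have hA : 0 ≤ A := by positivity
    have hB : 0 ≤ B := by positivity
    set r := ‖ξ‖
    have hr : 0 ≤ r := norm_nonneg ξ
    set q := ((1 : ℝ) + r ^ 2) ^ (-(1/2) : ℝ) with hq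
    have hq0 : 0 ≤ q := Real.rpow_nonneg (by positivity) _
    by_cases hrR : r ≤ R
    · rw [Set.indicator_of_mem (by exact hrR)]
      have hAB : A + B ≤ M := by
        have := hMξ (by simpa using hrR)
        exact (le_abs_self _).trans this
      have key : |((r ^ 2 - k ^ 2) * D - k ^ 2 * E) / r ^ 2| ≤ (R ^ 2 + k ^ 2) * M := by
        rcases hr.eq_or_lt with h0 | h0
        · rw [← h0]; simp
          have : 0 ≤ M := by linarith
          positivity
        · rw [abs_div, abs_of_pos (by positivity : 0 < r ^ 2), div_le_iff₀ (by positivity)]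
          have hr2 : r ^ 2 ≤ R ^ 2 := by gcongr
          have hk2 : 0 ≤ k ^ 2 := by positivity
          have : |(r ^ 2 - k ^ 2) * D - k ^ 2 * E| ≤ (R ^ 2 + k ^ 2) * (D + E) := by
            rw [abs_le]
            constructor <;> nlinarith [mul_nonneg hk2 hD, mul_nonneg hk2 hE,
              mul_le_mul_of_nonneg_right hr2 hD, mul_nonneg (sq_nonneg r) hD, mul_nonneg (sq_nonneg R) hE]
          rw [hdc] at this
          calc _ ≤ _ := this
            _ ≤ (R ^ 2 + k ^ 2) * (r ^ 2 * M) := by gcongr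
            _ = _ := by ring
      have t1 : 0 ≤ 2 * (q * D) + 4 * k ^ 2 * (q * A + q * B) := by positivity
      have t2 : (Real.sqrt |r ^ 2 - k ^ 2|)⁻¹ * |((r ^ 2 - k ^ 2) * D - k ^ 2 * E) / r ^ 2| ≤
          (Real.sqrt |r ^ 2 - k ^ 2|)⁻¹ * ((R ^ 2 + k ^ 2) * M) := by gcongr
      linarith
    · rw [Set.indicator_of_notMem (by exact hrR), mul_zero, zero_add]
      push Not at hrR
      have hr1 : 1 ≤ r := by linarith
      have hr0 : 0 < r := by linarith
      have hrk : 2 * k ≤ r := by linarith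
      have hs : r ^ 2 / 4 ≤ r ^ 2 - k ^ 2 := by nlinarith
      have hpos : 0 < r ^ 2 - k ^ 2 := by nlinarith
      rw [abs_of_pos hpos]
      set s := Real.sqrt (r ^ 2 - k ^ 2) with hsd
      have hss : s ^ 2 = r ^ 2 - k ^ 2 := Real.sq_sqrt hpos.le
      have hs0 : 0 < s := Real.sqrt_pos.2 hpos
      have hs1 : r / 2 ≤ s := by
        apply Real.le_sqrt_of_sq_le; linarith
      have hs2 : s ≤ r := by
        apply Real.sqrt_le_iff.2 ⟨hr, by nlinarith⟩
      have hqr : 1 / r ≤ 2 * q := by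
        have : q = (Real.sqrt (1 + r ^ 2))⁻¹ := by
          rw [hq, Real.rpow_neg (by positivity), ← Real.sqrt_eq_rpow]
        have h2 : Real.sqrt (1 + r ^ 2) ≤ 2 * r := Real.sqrt_le_iff.2 ⟨by positivity, by nlinarith⟩
        have h3 : (2 * r)⁻¹ ≤ q := by rw [this]; gcongr
        calc 1 / r = 2 * (2 * r)⁻¹ := by field_simp
          _ ≤ _ := by linarith
      have hEr : E / r ^ 2 ≤ A + B := by
        rw [div_le_iff₀ (by positivity)]; nlinarith
      have b1 : |((r ^ 2 - k ^ 2) * D - k ^ 2 * E) / r ^ 2| ≤ s ^ 2 * (D / r ^ 2) + k ^ 2 * (E / r ^ 2) := by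
        rw [← hss]
        have e : (s ^ 2 * D - k ^ 2 * E) / r ^ 2 = s ^ 2 * (D / r ^ 2) - k ^ 2 * (E / r ^ 2) := by ring
        rw [e]
        have x1 : 0 ≤ s ^ 2 * (D / r ^ 2) := by positivity
        have x2 : 0 ≤ k ^ 2 * (E / r ^ 2) := by positivity
        rw [abs_le]; constructor <;> linarith
      calc s⁻¹ * |((r ^ 2 - k ^ 2) * D - k ^ 2 * E) / r ^ 2|
          ≤ s⁻¹ * (s ^ 2 * (D / r ^ 2) + k ^ 2 * (E / r ^ 2)) := by gcongr
        _ = s * (D / r ^ 2) + s⁻¹ * (k ^ 2 * (E / r ^ 2)) := by field_simp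
        _ ≤ r * (D / r ^ 2) + (r / 2)⁻¹ * (k ^ 2 * (A + B)) := by gcongr
        _ = (1 / r) * (D + 2 * k ^ 2 * (A + B)) := by field_simp
        _ ≤ (2 * q) * (D + 2 * k ^ 2 * (A + B)) := by gcongr
        _ = _ := by ring

lemma ae_zero_open {f : R2 → ℂ} (hf : Continuous f) {k : ℝ}
    (h : ∀ᵐ ξ : R2, ‖ξ‖ < k → f ξ = 0) (ξ : R2) (hξ : ‖ξ‖ < k) : f ξ = 0 := by
  by_contra hne
  have ho : IsOpen {x : R2 | ‖x‖ < k ∧ f x ≠ 0} :=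
    (isOpen_lt continuous_norm continuous_const).inter (isOpen_ne_fun hf continuous_const)
  have hpos := ho.measure_pos (volume : Measure R2) ⟨ξ, hξ, hne⟩
  have h0 : (volume : Measure R2) {x : R2 | ‖x‖ < k ∧ f x ≠ 0} = 0 := by
    rw [ae_iff] at h
    simpa using h
  exact hpos.ne' h0

lemma disk_zero {Γ : Set R2} {k : ℝ} (hk : 0 < k) (W : Xelt Γ) (h : Bform k W W = 0) :
    ∀ᵐ ξ : R2, ‖ξ‖ < k → W.c1.ft ξ = 0 ∧ W.c2.ft ξ = 0 := by
  have hI := Bint_integrable hk W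
  set F := fun ξ => Bintegrand k W.c1.ft W.c2.ft W.c1.ft W.c2.ft ξ with hF
  have him : ∫ ξ, -(F ξ).im = 0 := by
    rw [integral_neg]
    have : ∫ ξ, (F ξ).im = (∫ ξ, F ξ).im := integral_im hI
    rw [this]
    have h' : ∫ ξ, F ξ = 0 := h
    rw [h']; simp
  have hcalc : ∀ ξ : R2, ‖ξ‖ < k → -(F ξ).im = (Real.sqrt (k ^ 2 - ‖ξ‖ ^ 2))⁻¹ *
      (((k ^ 2 - ‖ξ‖ ^ 2) * ‖dotFt W.c1.ft W.c2.ft ξ‖ ^ 2 + k ^ 2 * ‖curlFt W.c1.ft W.c2.ft ξ‖ ^ 2) / ‖ξ‖ ^ 2) := by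
    intro ξ hξ
    simp only [hF]
    rw [Bint_eq, Complex.im_mul_ofReal]
    have : (g0hat k ξ).im = (Real.sqrt (k ^ 2 - ‖ξ‖ ^ 2))⁻¹ := by
      unfold g0hat
      rw [if_pos hξ, Complex.div_ofReal_im, Complex.I_im, one_div]
    rw [this]
    ring
  have hnn : 0 ≤ fun ξ => -(F ξ).im := by
    intro ξ
    simp only [Pi.zero_apply]
    by_cases hξ : ‖ξ‖ < k
    · rw [hcalc ξ hξ]
      have : 0 ≤ k ^ 2 - ‖ξ‖ ^ 2 := by nlinarith [norm_nonneg ξ]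
      positivity
    · simp only [hF]
      rw [Bint_eq, Complex.im_mul_ofReal]
      unfold g0hat
      rw [if_neg hξ, Complex.div_ofReal_im]
      simp
  have hae := (integral_eq_zero_iff_of_nonneg hnn hI.im.neg).1 him
  have hne : ∀ᵐ ξ : R2, ξ ≠ 0 := by
    rw [ae_iff]; simp
  filter_upwards [hae, hne] with ξ h1 h0 hξ
  have h2 : -(F ξ).im = 0 := h1
  rw [hcalc ξ hξ] at h2
  have hr : 0 < ‖ξ‖ := norm_pos_iff.2 h0
  have hpos : 0 < k ^ 2 - ‖ξ‖ ^ 2 := by nlinarith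
  have hsq := Real.sqrt_pos.2 hpos
  have hdc := dot_curl W.c1.ft W.c2.ft ξ
  have h3 : (k ^ 2 - ‖ξ‖ ^ 2) * ‖dotFt W.c1.ft W.c2.ft ξ‖ ^ 2 + k ^ 2 * ‖curlFt W.c1.ft W.c2.ft ξ‖ ^ 2 = 0 := by
    rcases mul_eq_zero.1 h2 with h4 | h4
    · exact absurd h4 (by positivity)
    · exact (div_eq_zero_iff.1 h4).resolve_right (by positivity)
  have a1 : 0 ≤ (k ^ 2 - ‖ξ‖ ^ 2) * ‖dotFt W.c1.ft W.c2.ft ξ‖ ^ 2 := by positivity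
  have a2 : 0 ≤ k ^ 2 * ‖curlFt W.c1.ft W.c2.ft ξ‖ ^ 2 := by positivity
  have d0 : ‖dotFt W.c1.ft W.c2.ft ξ‖ ^ 2 = 0 :=
    (mul_eq_zero.1 (by linarith : (k ^ 2 - ‖ξ‖ ^ 2) * ‖dotFt W.c1.ft W.c2.ft ξ‖ ^ 2 = 0)).resolve_left hpos.ne'
  have e0 : ‖curlFt W.c1.ft W.c2.ft ξ‖ ^ 2 = 0 :=
    (mul_eq_zero.1 (by linarith : k ^ 2 * ‖curlFt W.c1.ft W.c2.ft ξ‖ ^ 2 = 0)).resolve_left (by positivity)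
  rw [d0, e0, add_zero] at hdc
  have s0 := (mul_eq_zero.1 hdc.symm).resolve_left (by positivity)
  have n1 := sq_nonneg ‖W.c1.ft ξ‖
  have n2 := sq_nonneg ‖W.c2.ft ξ‖
  constructor
  · exact norm_eq_zero.1 (pow_eq_zero_iff two_ne_zero |>.1 (by linarith))
  · exact norm_eq_zero.1 (pow_eq_zero_iff two_ne_zero |>.1 (by linarith))

/-- Proposition 3.6: if `W ∈ X` satisfies `B(W,W) = 0` then `W = 0`. -/
theorem statement10 (Γ : Set R2) (hΓ : IsLipschitzDomain Γ) (k : ℝ) (hk : 0 < k)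
    (W : Xelt Γ) (h : Bform k W W = 0) :
    ∀ ξ : R2, W.c1.ft ξ = 0 ∧ W.c2.ft ξ = 0 := by
  have hd := disk_zero hk W h
  intro ξ
  exact ⟨ft_zero hΓ.2.1 W.c1 hk (ae_zero_open W.c1.cont (hd.mono fun x hx hxk => (hx hxk).1)) ξ,
    ft_zero hΓ.2.1 W.c2 hk (ae_zero_open W.c2.cont (hd.mono fun x hx hxk => (hx hxk).2)) ξ⟩

end
end

section
/- Let k ∈ ℂ with Im k > 0. For every ξ ∈ ℝ², the two-dimensional Fourier transform of the restriction of the Helmholtz free-space Green's function to the plane satisfies ∫_{ℝ²} e^{-ix·ξ} · e^{ik|x|}/(4π|x|) dx = i / (2 √(k²−|ξ|²)), where the integral converges absolutely and √(k²−|ξ|²) denotes the branch of the square root with positive imaginary part (well defined since k²−|ξ|² is not a nonnegative real number when Im k > 0). -/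
noncomputable section

open MeasureTheory Complex Filter Topology
open scoped Real NNReal ContDiff

/-- Every admissible radicand has a square root with positive imaginary part. -/
theorem exists_root12 (k : ℂ) (hk : 0 < k.im) (ρ : ℝ) :
    ∃ w : ℂ, w ^ 2 = k ^ 2 - ((ρ ^ 2 : ℝ) : ℂ) ∧ 0 < w.im := by
  obtain ⟨w, hw⟩ := IsAlgClosed.exists_pow_nat_eq (k ^ 2 - ((ρ ^ 2 : ℝ) : ℂ)) (n := 2) (by norm_num)
  have him : w.im ≠ 0 := by
    intro h0
    have h1 := congrArg Complex.re hw
    have h2 := congrArg Complex.im hw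
    simp only [pow_two, Complex.mul_re, Complex.mul_im, Complex.sub_re, Complex.sub_im,
      Complex.ofReal_re, Complex.ofReal_im, h0] at h1 h2
    have h3 : k.re * k.im = 0 := by linarith
    have h4 : k.re = 0 := by
      rcases mul_eq_zero.mp h3 with h | h
      · exact h
      · exact absurd h hk.ne'
    rw [h4] at h1
    nlinarith [mul_pos hk hk, mul_self_nonneg w.re, mul_self_nonneg ρ]
  rcases lt_or_gt_of_ne him with h | h
  · exact ⟨-w, by rw [neg_sq, hw], by simpa using h⟩
  · exact ⟨w, hw, h⟩

theorem norm_lt12 (k w : ℂ) (hk : 0 < k.im) (hw : 0 < w.im) (ρ : ℝ)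
    (h : w ^ 2 = k ^ 2 - ((ρ ^ 2 : ℝ) : ℂ)) : ρ < ‖k + w‖ := by
  have h1 := congrArg Complex.re h
  have h2 := congrArg Complex.im h
  simp only [pow_two, Complex.mul_re, Complex.mul_im, Complex.sub_re, Complex.sub_im,
      Complex.ofReal_re, Complex.ofReal_im] at h1 h2
  have h3 : ρ ^ 2 < ‖k + w‖ ^ 2 := by
    rw [← Complex.normSq_eq_norm_sq, Complex.normSq_apply]
    simp only [Complex.add_re, Complex.add_im]
    -- `a c + b d > 0` suffices
    have key : 0 < k.re * w.re + k.im * w.im := by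
      have e : k.re * k.im = w.re * w.im := by linarith
      have e2 : k.re * w.re * k.im = w.re ^ 2 * w.im := by
        calc k.re * w.re * k.im = w.re * (k.re * k.im) := by ring
          _ = _ := by rw [e]; ring
      have : 0 < (k.re * w.re + k.im * w.im) * k.im := by
        have : (k.re * w.re + k.im * w.im) * k.im = (w.re ^ 2 + k.im ^ 2) * w.im := by
          rw [add_mul, e2]; ring
        rw [this]; positivity
      exact pos_of_mul_pos_left this hk.le
    nlinarith [mul_pos hw hw, mul_self_nonneg w.re, key]
  exact lt_of_pow_lt_pow_left₀ 2 (norm_nonneg _) h3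

theorem ne12 (a z : ℂ) (ha : ‖a‖ < 1) (hz : ‖z‖ ≤ 1) : 1 - a * z ≠ 0 := by
  intro h
  have : a * z = 1 := (sub_eq_zero.mp h).symm
  have h2 : ‖a * z‖ = 1 := by rw [this]; simp
  rw [norm_mul] at h2
  nlinarith [norm_nonneg a, norm_nonneg z]

theorem mean12 (a : ℂ) (ha : ‖a‖ < 1) :
    ∫ θ in (-π)..π, (1 - a * Complex.exp (θ * I))⁻¹ = 2 * π := by
  have h1 : Real.circleAverage (fun z : ℂ => (1 - a * z)⁻¹) 0 1 = 1 := by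
    rw [circleAverage_of_differentiable_on_off_countable (s := ∅) Set.countable_empty]
    · simp
    · intro z hz
      have : ‖z‖ ≤ 1 := by simpa using hz
      have := ne12 a z ha this
      have hc : ContinuousAt (fun z : ℂ => 1 - a * z) z := by fun_prop
      exact (hc.inv₀ this).continuousWithinAt
    · intro z hz
      have : ‖z‖ ≤ 1 := by
        have := hz.1
        simp at this
        exact this.le
      have := ne12 a z ha this
      exact DifferentiableAt.inv (by fun_prop) this
  rw [Real.circleAverage_def] at h1
  have hp : Function.Periodic (fun θ : ℝ => (1 - a * Complex.exp (θ * I))⁻¹) (2 * π) := by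
    intro θ
    simp only
    congr 3
    push_cast
    rw [add_mul]
    exact Complex.exp_periodic _
  have h2 := hp.intervalIntegral_add_eq (-π) 0
  rw [show -π + 2 * π = π by ring, zero_add] at h2
  rw [h2]
  have h3 : (∫ θ in (0:ℝ)..2 * π, (1 - a * circleMap 0 1 θ)⁻¹) = 2 * π := by
    have : (2 * π : ℝ) • ((2 * π)⁻¹ • ∫ θ in (0:ℝ)..2 * π, (1 - a * circleMap 0 1 θ)⁻¹) 
       = (2 * π : ℝ) • (1 : ℂ) := by rw [h1]
    rw [smul_inv_smul₀ (by positivity)] at this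
    rw [this]; simp
  simpa [circleMap] using h3

theorem mean12' (a : ℂ) (ha : ‖a‖ < 1) :
    ∫ θ in (-π)..π, (1 - a * Complex.exp (-(θ * I)))⁻¹ = 2 * π := by
  rw [← mean12 a ha]
  have := intervalIntegral.integral_comp_neg (a := -π) (b := π)
    (fun θ : ℝ => (1 - a * Complex.exp (θ * I))⁻¹)
  simpa using this

theorem cont12 (a : ℂ) (ha : ‖a‖ < 1) :
    Continuous (fun θ : ℝ => (1 - a * Complex.exp (θ * I))⁻¹) := by
  refine Continuous.inv₀ (by fun_prop) (fun θ => ne12 _ _ ha ?_)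
  simp [Complex.norm_exp]

theorem cont12' (a : ℂ) (ha : ‖a‖ < 1) :
    Continuous (fun θ : ℝ => (1 - a * Complex.exp (-(θ * I)))⁻¹) := by
  refine Continuous.inv₀ (by fun_prop) (fun θ => ne12 _ _ ha ?_)
  simp [Complex.norm_exp]

/-- The angular integral. -/
theorem angular12 (k w : ℂ) (hk : 0 < k.im) (hw : 0 < w.im) (p q ρ : ℝ) (hρ : 0 ≤ ρ)
    (hpq : ρ ^ 2 = p ^ 2 + q ^ 2)
    (h : w ^ 2 = k ^ 2 - ((ρ ^ 2 : ℝ) : ℂ)) :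
    ∫ θ in (-π)..π, (k - ((Real.cos θ * p + Real.sin θ * q : ℝ) : ℂ))⁻¹ = 2 * π / w := by
  have hlt := norm_lt12 k w hk hw ρ h
  have hkw : k + w ≠ 0 := by
    intro h0
    rw [h0, norm_zero] at hlt
    linarith
  have hw0 : w ≠ 0 := by rintro rfl; simp at hw
  set α : ℂ := (p - q * I) / (k + w) with hα
  set β : ℂ := (p + q * I) / (k + w) with hβ
  have hn1 : ‖(p : ℂ) + q * I‖ = ρ := by
    rw [Complex.norm_add_mul_I, ← hpq, Real.sqrt_sq hρ]
  have hn2 : ‖(p : ℂ) - q * I‖ = ρ := by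
    have := Complex.norm_add_mul_I p (-q)
    rw [neg_sq, ← hpq, Real.sqrt_sq hρ] at this
    rw [← this]; push_cast; congr 1; ring
  have hα1 : ‖α‖ < 1 := by
    rw [hα, norm_div, hn2, div_lt_one (lt_of_le_of_lt hρ hlt)]; exact hlt
  have hβ1 : ‖β‖ < 1 := by
    rw [hβ, norm_div, hn1, div_lt_one (lt_of_le_of_lt hρ hlt)]; exact hlt
  have hpt : ∀ θ : ℝ, (k - ((Real.cos θ * p + Real.sin θ * q : ℝ) : ℂ))⁻¹ =
      w⁻¹ * ((1 - α * Complex.exp (θ * I))⁻¹ + (1 - β * Complex.exp (-(θ * I)))⁻¹ - 1) := by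
    intro θ
    have hA := ne12 α (Complex.exp (θ * I)) hα1 (by simp [Complex.norm_exp])
    have hB := ne12 β (Complex.exp (-(θ * I))) hβ1 (by simp [Complex.norm_exp])
    have hprod : Complex.exp (θ * I) * Complex.exp (-(θ * I)) = 1 := by
      rw [← Complex.exp_add]; simp
    have hcos : ((Real.cos θ : ℝ) : ℂ) = (Complex.exp (θ * I) + Complex.exp (-(θ * I))) / 2 := by
      rw [Complex.ofReal_cos, Complex.cos]; simp
    have hsin : ((Real.sin θ : ℝ) : ℂ) =
        (Complex.exp (-(θ * I)) - Complex.exp (θ * I)) * I / 2 := by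
      rw [Complex.ofReal_sin, Complex.sin]; simp
    push_cast [-Complex.ofReal_cos, -Complex.ofReal_sin]
    rw [hcos, hsin]
    generalize Complex.exp (θ * I) = z at *
    generalize Complex.exp (-(θ * I)) = v at *
    have hαβ : α * β * (k + w) = k - w := by
      rw [hα, hβ]
      field_simp
      have : (ρ : ℂ) ^ 2 = p ^ 2 + q ^ 2 := by exact_mod_cast hpq
      have h' : w ^ 2 = k ^ 2 - (ρ : ℂ) ^ 2 := by rw [h]; push_cast; ring
      linear_combination h' - this - (q : ℂ) ^ 2 * Complex.I_sq
    have hα' : α * (k + w) = p - q * I := by rw [hα]; field_simp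
    have hβ' : β * (k + w) = p + q * I := by rw [hβ]; field_simp
    have hfac : k - ((z + v) / 2 * p + (v - z) * I / 2 * q) =
        (k + w) / 2 * ((1 - α * z) * (1 - β * v)) := by
      linear_combination (z / 2) * hα' + (v / 2) * hβ' - (z * v) / 2 * hαβ - (k - w) / 2 * hprod
    rw [hfac]
    have hrhs : (1 - α * z)⁻¹ + (1 - β * v)⁻¹ - 1 = (1 - α * β) / ((1 - α * z) * (1 - β * v)) := by
      field_simp
      linear_combination (-α * β) * hprod
    rw [hrhs]
    have h2 : (1 - α * β) * (k + w) = 2 * w := by linear_combination -hαβ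
    have h3 : 1 - α * β = 2 * w / (k + w) := by rw [← h2]; field_simp
    rw [h3]
    field_simp
  simp_rw [hpt]
  rw [intervalIntegral.integral_const_mul, intervalIntegral.integral_sub,
    intervalIntegral.integral_add, mean12 α hα1, mean12' β hβ1]
  · simp
    field_simp
    ring
  · exact (cont12 α hα1).intervalIntegrable _ _
  · exact (cont12' β hβ1).intervalIntegrable _ _
  · exact ((cont12 α hα1).add (cont12' β hβ1)).intervalIntegrable _ _
  · exact continuous_const.intervalIntegrable _ _

theorem norm_integrand12 (k : ℂ) (ξ x : R2) :
    ‖Complex.exp (-Complex.I * (rdot x ξ : ℂ)) *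
      (Complex.exp (Complex.I * k * (‖x‖ : ℂ)) / (4 * (Real.pi : ℂ) * (‖x‖ : ℂ)))‖ =
    Real.exp (-k.im * ‖x‖) / (4 * π * ‖x‖) := by
  simp [Complex.norm_exp, abs_of_pos Real.pi_pos]

theorem integrable12 (k : ℂ) (hk : 0 < k.im) (ξ : R2) :
    Integrable (fun x : R2 => Complex.exp (-Complex.I * (rdot x ξ : ℂ)) *
      (Complex.exp (Complex.I * k * (‖x‖ : ℂ)) / (4 * (Real.pi : ℂ) * (‖x‖ : ℂ)))) volume := by
  have hm : Measurable (fun x : R2 => Complex.exp (-Complex.I * (rdot x ξ : ℂ)) *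
      (Complex.exp (Complex.I * k * (‖x‖ : ℂ)) / (4 * (Real.pi : ℂ) * (‖x‖ : ℂ)))) := by
    unfold rdot
    fun_prop
  rw [← integrable_norm_iff hm.aestronglyMeasurable]
  simp_rw [norm_integrand12]
  have := (integrable_fun_norm_addHaar (volume : Measure R2)
    (f := fun r : ℝ => Real.exp (-k.im * r) / (4 * π * r))).mpr
  refine this ?_
  have h2 : Module.finrank ℝ R2 - 1 = 1 := by simp
  rw [h2]
  have h3 : IntegrableOn (fun r : ℝ => Real.exp (-k.im * r) / (4 * π)) (Set.Ioi 0) :=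
    (integrableOn_exp_mul_Ioi (a := -k.im) (by linarith) 0).div_const _
  refine h3.congr_fun ?_ measurableSet_Ioi
  intro r hr
  have : r ≠ 0 := ne_of_gt hr
  simp only [pow_one, smul_eq_mul]
  field_simp

theorem radial12 (k : ℂ) (hk : 0 < k.im) (s : ℝ) :
    ∫ r in Set.Ioi (0 : ℝ), Complex.exp (I * (k - s) * r) = I * (k - s)⁻¹ := by
  have hne : k - (s : ℂ) ≠ 0 := by
    intro h0
    have := congrArg Complex.im h0
    simp at this
    exact hk.ne' this
  rw [integral_exp_mul_complex_Ioi (by simpa using hk)]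
  simp
  field_simp
  simp

theorem polar12 (k : ℂ) (hk : 0 < k.im) (ξ : R2) :
    (∫ x : R2, Complex.exp (-Complex.I * (rdot x ξ : ℂ)) *
        (Complex.exp (Complex.I * k * (‖x‖ : ℂ)) / (4 * (Real.pi : ℂ) * (‖x‖ : ℂ)))) =
    (4 * π : ℂ)⁻¹ * ∫ θ in (-π)..π,
      I * (k - ((Real.cos θ * ξ 0 + Real.sin θ * ξ 1 : ℝ) : ℂ))⁻¹ := by
  have hmp := Complex.orthonormalBasisOneI.repr.measurePreserving
  rw [← hmp.integral_comp Complex.orthonormalBasisOneI.repr.toHomeomorph.measurableEmbedding,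
    ← Complex.integral_comp_polarCoord_symm]
  have h1 : ∀ p ∈ polarCoord.target, (p.1 • (Complex.exp (-Complex.I *
        (rdot (Complex.orthonormalBasisOneI.repr (Complex.polarCoord.symm p)) ξ : ℂ)) *
        (Complex.exp (Complex.I * k *
          (‖Complex.orthonormalBasisOneI.repr (Complex.polarCoord.symm p)‖ : ℂ)) /
          (4 * (Real.pi : ℂ) *
          (‖Complex.orthonormalBasisOneI.repr (Complex.polarCoord.symm p)‖ : ℂ)))) : ℂ) =
      (4 * π : ℂ)⁻¹ * Complex.exp (I * (k -
        ((Real.cos p.2 * ξ 0 + Real.sin p.2 * ξ 1 : ℝ) : ℂ)) * p.1) := by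
    intro p hp
    have hp1 : 0 < p.1 := hp.1
    have hr : (p.1 : ℂ) ≠ 0 := by exact_mod_cast hp1.ne'
    rw [LinearIsometryEquiv.norm_map, Complex.norm_polarCoord_symm, abs_of_pos hp1]
    have hd : rdot (Complex.orthonormalBasisOneI.repr (Complex.polarCoord.symm p)) ξ =
        p.1 * (Real.cos p.2 * ξ 0 + Real.sin p.2 * ξ 1) := by
      unfold rdot
      simp [Complex.orthonormalBasisOneI_repr_apply, -Complex.ofReal_cos, -Complex.ofReal_sin]
      ring
    rw [hd, Complex.real_smul]
    rw [show I * (k - ((Real.cos p.2 * ξ 0 + Real.sin p.2 * ξ 1 : ℝ) : ℂ)) * p.1 =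
      -I * ((p.1 * (Real.cos p.2 * ξ 0 + Real.sin p.2 * ξ 1) : ℝ) : ℂ) + I * k * p.1 by
        push_cast; ring, Complex.exp_add]
    field_simp
  rw [setIntegral_congr_fun polarCoord.open_target.measurableSet h1, integral_const_mul]
  congr 1
  have ht : polarCoord.target = Set.Ioi (0 : ℝ) ×ˢ Set.Ioo (-π) π := rfl
  rw [ht, Measure.volume_eq_prod, ← Measure.prod_restrict, integral_prod_symm]
  · rw [intervalIntegral.integral_of_le (by linarith [Real.pi_pos]), integral_Ioc_eq_integral_Ioo]
    refine integral_congr_ae (Eventually.of_forall fun θ => ?_)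
    exact radial12 k hk (Real.cos θ * ξ 0 + Real.sin θ * ξ 1)
  · have hb : Integrable (fun p : ℝ × ℝ => Real.exp (-k.im * p.1) * (1 : ℝ))
        ((volume.restrict (Set.Ioi (0 : ℝ))).prod (volume.restrict (Set.Ioo (-π) π))) :=
      Integrable.mul_prod (integrableOn_exp_mul_Ioi (a := -k.im) (by linarith) 0)
        (integrable_const (1 : ℝ))
    refine hb.mono' ?_ (Eventually.of_forall fun p => ?_)
    · exact Continuous.aestronglyMeasurable (by fun_prop)
    · rw [Complex.norm_exp]
      simp

/-- for `k ∈ ℂ` with `Im k > 0` and any `ξ ∈ ℝ²`, the planar Fourier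
transform of `e^{ik|x|}/(4π|x|)` converges absolutely and equals `i/(2√(k²-|ξ|²))`,
where `√(k²-|ξ|²)` is the square root with positive imaginary part. -/
theorem statement12 (k : ℂ) (hk : 0 < k.im) (ξ : R2) :
    Integrable (fun x : R2 => Complex.exp (-Complex.I * (rdot x ξ : ℂ)) *
      (Complex.exp (Complex.I * k * (‖x‖ : ℂ)) / (4 * (Real.pi : ℂ) * (‖x‖ : ℂ)))) volume ∧
    ∃ w : ℂ, w ^ 2 = k ^ 2 - ((‖ξ‖ ^ 2 : ℝ) : ℂ) ∧ 0 < w.im ∧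
      (∫ x : R2, Complex.exp (-Complex.I * (rdot x ξ : ℂ)) *
        (Complex.exp (Complex.I * k * (‖x‖ : ℂ)) / (4 * (Real.pi : ℂ) * (‖x‖ : ℂ)))) =
        Complex.I / (2 * w) := by
  obtain ⟨w, hw, hwi⟩ := exists_root12 k hk ‖ξ‖
  refine ⟨integrable12 k hk ξ, w, hw, hwi, ?_⟩
  have hn : ‖ξ‖ ^ 2 = (ξ 0) ^ 2 + (ξ 1) ^ 2 := by
    rw [EuclideanSpace.norm_sq_eq]
    simp
  have hw0 : w ≠ 0 := by rintro rfl; simp at hwi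
  rw [polar12 k hk ξ, intervalIntegral.integral_const_mul,
    angular12 k w hk hwi (ξ 0) (ξ 1) ‖ξ‖ (norm_nonneg _) hn hw]
  have hpi : (π : ℂ) ≠ 0 := by exact_mod_cast Real.pi_ne_zero
  field_simp
  norm_num

end
end
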